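/- Let $c$ and $\mu$ be fixed real numbers with $c > 1$ and $0 < \mu \leq \frac{1}{3}$. There exist constants $c_0 = c_0(c, \mu) > 0$ and $X_0 = X_0(c, \mu)$ such that for every real $X \geq X_0$, setting $N = X^c$, the integral $B_1 = \int_{-\infty}^{\infty} e(-N\alpha)\, I(\alpha)^3 \, d\alpha$ converges absolutely, is a real number, and satisfies $B_1 \geq c_0 X^{3 - c}$. -/

import Mathlib

/-!
The substitution `t = X s`, `β = X^c α` turns the integral into `X^(3 - c)` times its value at
`X = 1` (`I_scale`), so it suffices to show that the integral for `X = 1` converges absolutely and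
is a positive real number.

Absolute convergence: `|I(α)| ≤ 1` trivially and `I(α) = O(1/|α|)` by partial integration
(`exists_abs_mul_norm_I_le`), so `I(α)^3` is dominated by a multiple of `1/(1 + α²)`.

Positivity: by dominated convergence the integral is the limit, as `δ → 0`, of the integrals
weighted by the Gaussian `exp(-π δ² α²)` (`tendsto_smoothed`). By Fubini and the Fourier transform
of the Gaussian, the weighted integral equals
`∫ δ⁻¹ exp(-π (t₁^c + t₂^c + t₃^c - 1)² / δ²) dt` over the cube `(μ, 1]³` (`smoothed_eq`), which is
real. It is bounded below uniformly in `δ`, because the slab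
`|t₁^c + t₂^c + t₃^c - 1| ≤ δ` has volume at least a constant times `δ`
(`exists_le_measure_slab`). This is where `μ ≤ 1/3` and `c > 1` enter: they put the diagonal
solution `t₁ = t₂ = t₃ = 3^(-1/c)` in the interior of the cube.
-/

open MeasureTheory

/-- `e(t) = e^{2πit}`. -/
noncomputable def e (t : ℝ) : ℂ := Complex.exp (2 * Real.pi * Complex.I * t)

/-- `I(α) = ∫_{μX}^{X} e(α t^c) dt`. -/
noncomputable def I (c μ X : ℝ) (α : ℝ) : ℂ := ∫ t in (μ * X)..X, e (α * t ^ c)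

/-! ### The character `e` and scaling -/

lemma norm_e (t : ℝ) : ‖e t‖ = 1 := by
  have : (2 * Real.pi * Complex.I * t : ℂ) = ((2 * Real.pi * t : ℝ) : ℂ) * Complex.I := by
    push_cast; ring
  rw [e, this, Complex.norm_exp_ofReal_mul_I]

lemma e_add (s t : ℝ) : e (s + t) = e s * e t := by
  simp only [e, ← Complex.exp_add]
  congr 1; push_cast; ring

lemma continuous_e : Continuous e := by unfold e; fun_prop

lemma continuous_rpow_of_one_lt {c : ℝ} (hc : 1 < c) : Continuous fun t : ℝ => t ^ c :=
  Real.continuous_rpow_const (by linarith)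

/-- Substituting `t = X s` reduces everything to `X = 1`. -/
lemma I_scale {c μ X : ℝ} (hμ : 0 < μ) (hμ1 : μ ≤ 1) (hX : 0 < X) (α : ℝ) :
    I c μ X α = X * I c μ 1 (X ^ c * α) := by
  have h := intervalIntegral.smul_integral_comp_mul_left (a := μ) (b := 1)
    (fun t => e (α * t ^ c)) X
  unfold I
  rw [mul_comm μ X, mul_one]
  rw [mul_one] at h
  rw [← h, Complex.real_smul]
  congr 1
  apply intervalIntegral.integral_congr
  intro t ht
  rw [Set.uIcc_of_le (by linarith)] at ht
  have ht0 : 0 ≤ t := by linarith [ht.1]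
  simp only [Real.mul_rpow hX.le ht0]
  congr 1; ring

/-! ### Decay of `I` and absolute convergence -/

lemma continuous_I {c μ : ℝ} (hc : 1 < c) : Continuous (I c μ 1) := by
  unfold I
  apply intervalIntegral.continuous_parametric_intervalIntegral_of_continuous'
  exact continuous_e.comp
    (continuous_fst.mul ((continuous_rpow_of_one_lt hc).comp continuous_snd))

lemma norm_I_le_one {c μ : ℝ} (hμ : 0 < μ) (hμ1 : μ ≤ 1) (α : ℝ) : ‖I c μ 1 α‖ ≤ 1 := by
  unfold I
  refine (intervalIntegral.norm_integral_le_of_norm_le_const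
    (C := 1) fun t _ => (norm_e _).le).trans ?_
  rw [mul_one, one_mul, abs_of_nonneg (by linarith)]
  linarith

/-- First-derivative bound: integrating by parts against `t ^ (1 - c)` gives
`I(α) = O(1 / |α|)`. -/
lemma exists_abs_mul_norm_I_le {c μ : ℝ} (hc : 1 < c) (hμ : 0 < μ) (hμ1 : μ ≤ 1) :
    ∃ C : ℝ, ∀ α : ℝ, |α| * ‖I c μ 1 α‖ ≤ C := by
  refine ⟨1 + μ ^ (1 - c) + (c - 1) * μ ^ (-c) * (1 - μ), fun α => ?_⟩
  have hpos : ∀ t ∈ Set.uIcc μ 1, 0 < t := fun t ht => by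
    rw [Set.uIcc_of_le hμ1] at ht; linarith [ht.1]
  have hE : ∀ t ∈ Set.uIcc μ 1, HasDerivAt (fun t : ℝ => e (α * t ^ c))
      (2 * Real.pi * Complex.I * (α * c * t ^ (c - 1) : ℝ) * e (α * t ^ c)) t := by
    intro t ht
    have h1 : HasDerivAt (fun t : ℝ => α * t ^ c) (α * (c * t ^ (c - 1))) t :=
      (Real.hasDerivAt_rpow_const (Or.inl (hpos t ht).ne')).const_mul α
    have h2 := ((h1.ofReal_comp).const_mul (2 * Real.pi * Complex.I)).cexp
    unfold e
    convert h2 using 1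
    push_cast; ring
  have hu : ∀ t ∈ Set.uIcc μ 1, HasDerivAt (fun t : ℝ => ((t ^ (1 - c) : ℝ) : ℂ))
      (((1 - c) * t ^ (-c) : ℝ) : ℂ) t := by
    intro t ht
    have h1 := (Real.hasDerivAt_rpow_const (p := 1 - c) (Or.inl (hpos t ht).ne')).ofReal_comp
    convert h1 using 4
    ring
  have hcr : ∀ p : ℝ, ContinuousOn (fun t : ℝ => t ^ p) (Set.uIcc μ 1) := fun p t ht =>
    (Real.continuousAt_rpow_const _ _ (Or.inl (hpos t ht).ne')).continuousWithinAt
  have hcE : Continuous fun t : ℝ => e (α * t ^ c) :=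
    continuous_e.comp (continuous_const.mul (continuous_rpow_of_one_lt hc))
  have hu' : IntervalIntegrable (fun t : ℝ => (((1 - c) * t ^ (-c) : ℝ) : ℂ)) volume μ 1 := by
    apply ContinuousOn.intervalIntegrable
    exact Complex.continuous_ofReal.comp_continuousOn (continuousOn_const.mul (hcr _))
  have hE' : IntervalIntegrable (fun t : ℝ => 2 * Real.pi * Complex.I *
      (α * c * t ^ (c - 1) : ℝ) * e (α * t ^ c)) volume μ 1 := by
    apply ContinuousOn.intervalIntegrable
    exact (continuousOn_const.mul
      (Complex.continuous_ofReal.comp_continuousOn (continuousOn_const.mul (hcr _)))).mul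
      hcE.continuousOn
  have key := intervalIntegral.integral_mul_deriv_eq_deriv_mul hu hE hu' hE'
  have hlhs : ∫ t in μ..1, ((t ^ (1 - c) : ℝ) : ℂ) * (2 * Real.pi * Complex.I *
      (α * c * t ^ (c - 1) : ℝ) * e (α * t ^ c)) =
      (2 * Real.pi * c : ℝ) * Complex.I * α * I c μ 1 α := by
    unfold I
    rw [mul_one, ← intervalIntegral.integral_const_mul]
    apply intervalIntegral.integral_congr
    intro t ht
    have h1 : t ^ (1 - c) * t ^ (c - 1) = 1 := by
      rw [← Real.rpow_add (hpos t ht)]; simp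
    have h2 : ((t ^ (1 - c) : ℝ) : ℂ) * ((t ^ (c - 1) : ℝ) : ℂ) = 1 := by
      rw [← Complex.ofReal_mul, h1, Complex.ofReal_one]
    simp only
    push_cast
    linear_combination (2 * Real.pi * Complex.I * α * c * e (α * t ^ c)) * h2
  rw [hlhs] at key
  have hint : ‖∫ t in μ..1, (((1 - c) * t ^ (-c) : ℝ) : ℂ) * e (α * t ^ c)‖ ≤
      (c - 1) * μ ^ (-c) * (1 - μ) := by
    have := intervalIntegral.norm_integral_le_of_norm_le_const (a := μ) (b := 1)
      (f := fun t : ℝ => (((1 - c) * t ^ (-c) : ℝ) : ℂ) * e (α * t ^ c))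
      (C := (c - 1) * μ ^ (-c)) ?_
    · rwa [abs_of_nonneg (by linarith : (0 : ℝ) ≤ 1 - μ)] at this
    · intro t ht
      rw [Set.uIoc_of_le hμ1] at ht
      have ht0 : 0 < t := hμ.trans ht.1
      rw [norm_mul, norm_e, mul_one, Complex.norm_real, norm_mul, Real.norm_eq_abs,
        Real.norm_eq_abs, abs_of_nonpos (by linarith : 1 - c ≤ 0),
        abs_of_pos (Real.rpow_pos_of_pos ht0 _), neg_sub]
      exact mul_le_mul_of_nonneg_left
        (Real.rpow_le_rpow_of_nonpos hμ ht.1.le (by linarith)) (by linarith)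
  have hn : 2 * Real.pi * c * |α| * ‖I c μ 1 α‖ ≤
      1 + μ ^ (1 - c) + (c - 1) * μ ^ (-c) * (1 - μ) := by
    have h0 : ‖(2 * Real.pi * c : ℝ) * Complex.I * α * I c μ 1 α‖ =
        2 * Real.pi * c * |α| * ‖I c μ 1 α‖ := by
      rw [norm_mul, norm_mul, norm_mul, Complex.norm_real, Complex.norm_I, Complex.norm_real,
        Real.norm_eq_abs, Real.norm_eq_abs, abs_of_pos (by positivity), mul_one]
    rw [← h0, key]
    refine (norm_sub_le _ _).trans (add_le_add ((norm_sub_le _ _).trans (add_le_add ?_ ?_)) hint)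
    · rw [norm_mul, norm_e]; simp
    · rw [norm_mul, norm_e, Complex.norm_real, Real.norm_eq_abs,
        abs_of_pos (Real.rpow_pos_of_pos hμ _), mul_one]
  refine le_trans ?_ hn
  rw [mul_assoc (2 * Real.pi * c)]
  refine le_mul_of_one_le_left (by positivity) ?_
  nlinarith [Real.pi_gt_three]

lemma integrable_unit {c μ : ℝ} (hc : 1 < c) (hμ : 0 < μ) (hμ1 : μ ≤ 1) :
    Integrable (fun α : ℝ => e (-α) * (I c μ 1 α) ^ 3) := by
  obtain ⟨C, hC⟩ := exists_abs_mul_norm_I_le hc hμ hμ1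
  refine Integrable.mono' (integrable_inv_one_add_sq.const_mul (1 + C ^ 2))
    ((continuous_e.comp continuous_neg).mul ((continuous_I hc).pow 3)).aestronglyMeasurable
    (Filter.Eventually.of_forall fun α => ?_)
  have h1 := norm_I_le_one (c := c) hμ hμ1 α
  have h2 := hC α
  set z := ‖I c μ 1 α‖
  have hz : 0 ≤ z := norm_nonneg _
  rw [norm_mul, norm_e, one_mul, norm_pow, ← div_eq_mul_inv, le_div_iff₀ (by positivity)]
  have h3 : (|α| * z) ^ 2 ≤ C ^ 2 := pow_le_pow_left₀ (by positivity) h2 2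
  rw [mul_pow, sq_abs] at h3
  have h4 : z ^ 2 ≤ 1 := pow_le_one₀ hz h1
  have h5 : z ^ 3 ≤ z ^ 2 := pow_le_pow_of_le_one hz h1 (by norm_num)
  calc z ^ 3 * (1 + α ^ 2) ≤ z ^ 2 * (1 + α ^ 2) := by gcongr
    _ ≤ 1 + C ^ 2 := by nlinarith

/-! ### Gaussian smoothing -/

/-- Lebesgue measure on the cube `(μ, 1]³`. -/
noncomputable def cube (μ : ℝ) : Measure ((ℝ × ℝ) × ℝ) :=
  ((volume.restrict (Set.Ioc μ 1)).prod (volume.restrict (Set.Ioc μ 1))).prod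
    (volume.restrict (Set.Ioc μ 1))

instance (μ : ℝ) : IsFiniteMeasure (cube μ) := by unfold cube; infer_instance

/-- The phase `t₁^c + t₂^c + t₃^c - 1`. -/
noncomputable def phase (c : ℝ) (p : (ℝ × ℝ) × ℝ) : ℝ := p.1.1 ^ c + p.1.2 ^ c + p.2 ^ c - 1

lemma continuous_phase {c : ℝ} (hc : 1 < c) : Continuous (phase c) := by
  have h := continuous_rpow_of_one_lt hc
  unfold phase
  exact (((h.comp (by fun_prop)).add (h.comp (by fun_prop))).add
    (h.comp (by fun_prop))).sub continuous_const

/-- The cube of `I` as an oscillatory integral over the cube, with the factor `e(-α)` absorbed in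
the phase. -/
lemma e_mul_I_cubed {c μ : ℝ} (hμ1 : μ ≤ 1) (α : ℝ) :
    e (-α) * (I c μ 1 α) ^ 3 = ∫ p, e (α * phase c p) ∂(cube μ) := by
  have h : ∀ p : (ℝ × ℝ) × ℝ, e (α * phase c p) =
      e (-α) * ((e (α * p.1.1 ^ c) * e (α * p.1.2 ^ c)) * e (α * p.2 ^ c)) := by
    intro p
    rw [← e_add, ← e_add, ← e_add]
    congr 1; unfold phase; ring
  simp_rw [h]
  rw [integral_const_mul, cube]
  rw [integral_prod_mul (fun q : ℝ × ℝ => e (α * q.1 ^ c) * e (α * q.2 ^ c))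
    (fun t : ℝ => e (α * t ^ c)),
    integral_prod_mul (fun t : ℝ => e (α * t ^ c)) (fun t : ℝ => e (α * t ^ c))]
  unfold I
  rw [mul_one, intervalIntegral.integral_of_le hμ1]
  ring

lemma integral_e_mul_gaussian {δ : ℝ} (hδ : 0 < δ) (y : ℝ) :
    ∫ α : ℝ, e (α * y) * (Real.exp (-(Real.pi * δ ^ 2) * α ^ 2) : ℂ) =
      ((δ⁻¹ * Real.exp (-Real.pi * (y / δ) ^ 2) : ℝ) : ℂ) := by
  have hb : 0 < ((Real.pi * δ ^ 2 : ℝ) : ℂ).re := by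
    rw [Complex.ofReal_re]; positivity
  have h := fourierIntegral_gaussian hb ((2 * Real.pi * y : ℝ) : ℂ)
  have hl : ∀ α : ℝ, e (α * y) * (Real.exp (-(Real.pi * δ ^ 2) * α ^ 2) : ℂ) =
      Complex.exp (Complex.I * ((2 * Real.pi * y : ℝ) : ℂ) * α) *
        Complex.exp (-((Real.pi * δ ^ 2 : ℝ) : ℂ) * α ^ 2) := by
    intro α
    unfold e
    push_cast
    congr 2
    ring
  simp_rw [hl]
  rw [h]
  have h1 : ((Real.pi : ℂ) / ((Real.pi * δ ^ 2 : ℝ) : ℂ)) ^ (1 / 2 : ℂ) = ((δ⁻¹ : ℝ) : ℂ) := by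
    have : (Real.pi : ℂ) / ((Real.pi * δ ^ 2 : ℝ) : ℂ) = (((δ⁻¹) ^ 2 : ℝ) : ℂ) := by
      have := Real.pi_pos.ne'
      rw [← Complex.ofReal_div]; congr 1; field_simp
    rw [this, show (1 / 2 : ℂ) = ((1 / 2 : ℝ) : ℂ) by push_cast; rfl,
      ← Complex.ofReal_cpow (by positivity), ← Real.sqrt_eq_rpow, Real.sqrt_sq (by positivity)]
  have h2 : -((2 * Real.pi * y : ℝ) : ℂ) ^ 2 / (4 * ((Real.pi * δ ^ 2 : ℝ) : ℂ)) =
      ((-Real.pi * (y / δ) ^ 2 : ℝ) : ℂ) := by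
    have h3 : -(2 * Real.pi * y) ^ 2 / (4 * (Real.pi * δ ^ 2)) = -Real.pi * (y / δ) ^ 2 := by
      have := Real.pi_pos.ne'
      field_simp
      ring
    rw [← h3]
    push_cast
    rfl
  rw [h1, h2, ← Complex.ofReal_exp, ← Complex.ofReal_mul]

/-- With a Gaussian weight in `α`, Fubini applies and the singular integral becomes the mean over the
cube of an approximate identity of width `δ` evaluated at the phase; in particular it is real and
nonnegative. -/
lemma smoothed_eq {c μ δ : ℝ} (hc : 1 < c) (hμ1 : μ ≤ 1) (hδ : 0 < δ) :
    ∫ α : ℝ, e (-α) * (I c μ 1 α) ^ 3 * (Real.exp (-(Real.pi * δ ^ 2) * α ^ 2) : ℂ) =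
      ((∫ p, δ⁻¹ * Real.exp (-Real.pi * (phase c p / δ) ^ 2) ∂(cube μ) : ℝ) : ℂ) := by
  have hg : Integrable fun α : ℝ => (Real.exp (-(Real.pi * δ ^ 2) * α ^ 2) : ℂ) :=
    (integrable_exp_neg_mul_sq (by positivity)).ofReal
  rw [← integral_complex_ofReal]
  simp_rw [← integral_e_mul_gaussian hδ, e_mul_I_cubed hμ1, ← integral_mul_const]
  apply integral_integral_swap
  have h1 : Integrable (fun z : ℝ × ((ℝ × ℝ) × ℝ) =>
      (Real.exp (-(Real.pi * δ ^ 2) * z.1 ^ 2) : ℂ) * (1 : ℂ)) (volume.prod (cube μ)) :=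
    hg.mul_prod (integrable_const (1 : ℂ))
  refine h1.mono ?_ (Filter.Eventually.of_forall fun z => ?_)
  · refine Continuous.aestronglyMeasurable ?_
    have h2 : Continuous fun z : ℝ × ((ℝ × ℝ) × ℝ) => e (z.1 * phase c z.2) :=
      continuous_e.comp (continuous_fst.mul ((continuous_phase hc).comp continuous_snd))
    exact h2.mul (by fun_prop)
  · simp [Function.uncurry, norm_e]

lemma tendsto_smoothed {c μ : ℝ} (hc : 1 < c) (hμ : 0 < μ) (hμ1 : μ ≤ 1) :
    Filter.Tendsto (fun n : ℕ => ∫ α : ℝ, e (-α) * (I c μ 1 α) ^ 3 *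
      (Real.exp (-(Real.pi * (1 / ((n : ℝ) + 1)) ^ 2) * α ^ 2) : ℂ)) Filter.atTop
      (nhds (∫ α : ℝ, e (-α) * (I c μ 1 α) ^ 3)) := by
  have hint := integrable_unit hc hμ hμ1
  refine tendsto_integral_of_dominated_convergence
    (fun α => ‖e (-α) * (I c μ 1 α) ^ 3‖) (fun n => ?_) hint.norm (fun n => ?_) ?_
  · exact hint.aestronglyMeasurable.mul (Continuous.aestronglyMeasurable (by fun_prop))
  · refine Filter.Eventually.of_forall fun α => ?_
    rw [norm_mul]
    refine mul_le_of_le_one_right (norm_nonneg _) ?_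
    rw [Complex.norm_real, Real.norm_eq_abs, Real.abs_exp, Real.exp_le_one_iff, neg_mul,
      neg_nonpos]
    positivity
  · refine Filter.Eventually.of_forall fun α => ?_
    have h1 : Filter.Tendsto (fun δ : ℝ => e (-α) * (I c μ 1 α) ^ 3 *
        (Real.exp (-(Real.pi * δ ^ 2) * α ^ 2) : ℂ)) (nhds 0)
        (nhds (e (-α) * (I c μ 1 α) ^ 3)) := by
      have h2 : Continuous (fun δ : ℝ => e (-α) * (I c μ 1 α) ^ 3 *
        (Real.exp (-(Real.pi * δ ^ 2) * α ^ 2) : ℂ)) := by fun_prop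
      simpa using h2.tendsto 0
    exact h1.comp tendsto_one_div_add_atTop_nhds_zero_nat

/-! ### Lower bound for the smoothed integral -/

lemma abs_rpow_sub_rpow_le {c s t : ℝ} (hc : 1 < c) (hs : s ∈ Set.Icc (0 : ℝ) 1)
    (ht : t ∈ Set.Icc (0 : ℝ) 1) : |s ^ c - t ^ c| ≤ c * |s - t| := by
  have h := (convex_Icc (0 : ℝ) 1).norm_image_sub_le_of_norm_hasDerivWithin_le
    (f := fun x : ℝ => x ^ c) (f' := fun x => c * x ^ (c - 1)) (C := c)
    (fun x _ => (Real.hasDerivAt_rpow_const (Or.inr hc.le)).hasDerivWithinAt)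
    (fun x hx => ?_) ht hs
  · simpa using h
  · rw [Real.norm_eq_abs, abs_of_nonneg (mul_nonneg (by linarith) (Real.rpow_nonneg hx.1 _))]
    exact mul_le_of_le_one_right (by linarith) (Real.rpow_le_one hx.1 hx.2 (by linarith))

/-- The slab `|t₁^c + t₂^c + t₃^c - 1| ≤ δ` has volume at least a constant times `δ`. The diagonal
point with all `tᵢ = 3^(-1/c)` solves the equation in the interior of the cube; for `(t₁, t₂)` in a
fixed neighbourhood the equation stays solvable in `t₃`, and `t ↦ t^c` is `c`-Lipschitz on
`[0, 1]`, so the slab contains an interval of `t₃` of length `2δ/c`. -/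
lemma exists_le_measure_slab {c μ : ℝ} (hc : 1 < c) (hμ : 0 < μ) (hμ3 : μ ≤ 1 / 3) :
    ∃ κ : ℝ, 0 < κ ∧ ∃ δ₀ : ℝ, 0 < δ₀ ∧ ∀ δ : ℝ, 0 < δ → δ ≤ δ₀ →
      κ * δ ≤ (cube μ).real {p | |phase c p| ≤ δ} := by
  have hc0 : 0 < c := by linarith
  obtain ⟨a, ha0, ha⟩ : ∃ a : ℝ, 0 < a ∧ a ^ c = 1 / 3 :=
    ⟨(1 / 3 : ℝ) ^ (1 / c), by positivity, by
      rw [← Real.rpow_mul (by norm_num), one_div_mul_cancel hc0.ne', Real.rpow_one]⟩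
  have ha1 : a < 1 := by
    rw [← Real.rpow_lt_rpow_iff ha0.le zero_le_one hc0, ha, Real.one_rpow]; norm_num
  have haμ : μ < a := by
    refine hμ3.trans_lt ?_
    rw [← Real.rpow_lt_rpow_iff (by norm_num) ha0.le hc0, ha]
    have := Real.rpow_lt_rpow_of_exponent_gt (x := (1 / 3 : ℝ)) (by norm_num) (by norm_num) hc
    simpa using this
  obtain ⟨r, hr0, hr1, hr2⟩ : ∃ r : ℝ, 0 < r ∧ μ < a - 2 * r ∧ a + 2 * r < 1 := by
    refine ⟨min (a - μ) (1 - a) / 3, ?_, ?_, ?_⟩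
    · have : 0 < min (a - μ) (1 - a) := lt_min (by linarith) (by linarith)
      linarith
    · have := min_le_left (a - μ) (1 - a); linarith
    · have := min_le_right (a - μ) (1 - a); linarith
  have hup : 0 < (a + r) ^ c - a ^ c :=
    sub_pos.2 (Real.rpow_lt_rpow ha0.le (by linarith) hc0)
  have hdn : 0 < a ^ c - (a - r) ^ c :=
    sub_pos.2 (Real.rpow_lt_rpow (by linarith) (by linarith) hc0)
  obtain ⟨ρ, hρ0, hρr, hρu, hρd⟩ : ∃ ρ : ℝ, 0 < ρ ∧ ρ ≤ r ∧
      2 * (c * ρ) ≤ (a + r) ^ c - a ^ c ∧ 2 * (c * ρ) ≤ a ^ c - (a - r) ^ c := by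
    have hm := lt_min hup hdn
    set m := min ((a + r) ^ c - a ^ c) (a ^ c - (a - r) ^ c) with hmdef
    have h1 : 2 * (c * min r (m / (2 * c))) ≤ m := by
      calc 2 * (c * min r (m / (2 * c))) ≤ 2 * (c * (m / (2 * c))) := by
            gcongr; exact min_le_right _ _
        _ = m := by field_simp
    exact ⟨min r (m / (2 * c)), lt_min hr0 (by positivity), min_le_left _ _,
      h1.trans (min_le_left _ _), h1.trans (min_le_right _ _)⟩
  refine ⟨2 / c * (2 * ρ * (2 * ρ)), by positivity, r, hr0, fun δ hδ hδr => ?_⟩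
  set ν : Measure ℝ := volume.restrict (Set.Ioc μ 1) with hν
  set A : Set ((ℝ × ℝ) × ℝ) := {p | |phase c p| ≤ δ} with hA
  have hAm : MeasurableSet A :=
    (isClosed_le (continuous_phase hc).abs continuous_const).measurableSet
  have hIcc : ∀ x y : ℝ, μ < x → y ≤ 1 → ν (Set.Icc x y) = ENNReal.ofReal (y - x) := by
    intro x y hx hy
    rw [hν, Measure.restrict_apply measurableSet_Icc, Set.inter_eq_left.2, Real.volume_Icc]
    exact fun t ht => ⟨hx.trans_le ht.1, ht.2.trans hy⟩
  set B : Set (ℝ × ℝ) := Set.Icc (a - ρ) (a + ρ) ×ˢ Set.Icc (a - ρ) (a + ρ) with hB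
  have hslice : ∀ q ∈ B, ENNReal.ofReal (2 / c * δ) ≤ ν (Prod.mk q ⁻¹' A) := by
    rintro ⟨t₁, t₂⟩ ⟨h1, h2⟩
    simp only at h1 h2
    have haI : a ∈ Set.Icc (0 : ℝ) 1 := ⟨ha0.le, ha1.le⟩
    have hL : ∀ t ∈ Set.Icc (a - ρ) (a + ρ), |t ^ c - a ^ c| ≤ c * ρ := fun t ht =>
      (abs_rpow_sub_rpow_le hc ⟨by linarith [ht.1], by linarith [ht.2]⟩ haI).trans
        (mul_le_mul_of_nonneg_left (abs_le.2 ⟨by linarith [ht.1], by linarith [ht.2]⟩) hc0.le)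
    have l1 := abs_le.1 (hL t₁ h1)
    have l2 := abs_le.1 (hL t₂ h2)
    obtain ⟨t₃, ht3, h3⟩ : 1 - t₁ ^ c - t₂ ^ c ∈ (fun t : ℝ => t ^ c) '' Set.Icc (a - r) (a + r) :=
      intermediate_value_Icc (by linarith) (continuous_rpow_of_one_lt hc).continuousOn
        ⟨by linarith, by linarith⟩
    simp only at h3
    have hδc : δ / c ≤ r := (div_le_self hδ.le hc.le).trans hδr
    have hδ0 : 0 < δ / c := by positivity
    have hsub : Set.Icc (t₃ - δ / c) (t₃ + δ / c) ⊆ Prod.mk (t₁, t₂) ⁻¹' A := by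
      intro t ht
      have h4 := abs_rpow_sub_rpow_le hc (s := t) (t := t₃)
        ⟨by linarith [ht.1, ht3.1], by linarith [ht.2, ht3.2]⟩
        ⟨by linarith [ht3.1], by linarith [ht3.2]⟩
      have h5 : |t - t₃| ≤ δ / c := abs_le.2 ⟨by linarith [ht.1], by linarith [ht.2]⟩
      have h6 : c * |t - t₃| ≤ δ := by rwa [le_div_iff₀' hc0] at h5
      have h7 : phase c ((t₁, t₂), t) = t ^ c - t₃ ^ c := by
        simp only [phase]; rw [h3]; ring
      rw [Set.mem_preimage, hA, Set.mem_ofPred_eq, h7]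
      exact h4.trans h6
    refine le_trans (le_of_eq ?_) (measure_mono hsub)
    rw [hIcc _ _ (by linarith [ht3.1]) (by linarith [ht3.2])]
    congr 1; ring
  have hBm : (ν.prod ν) B = ENNReal.ofReal (2 * ρ * (2 * ρ)) := by
    rw [hB, Measure.prod_prod, hIcc _ _ (by linarith) (by linarith),
      ← ENNReal.ofReal_mul (by linarith)]
    congr 1; ring
  have hmain : ENNReal.ofReal (2 / c * (2 * ρ * (2 * ρ)) * δ) ≤ cube μ A := by
    calc ENNReal.ofReal (2 / c * (2 * ρ * (2 * ρ)) * δ)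
        = ENNReal.ofReal (2 / c * δ) * (ν.prod ν) B := by
          rw [hBm, ← ENNReal.ofReal_mul (by positivity)]; congr 1; ring
      _ = ∫⁻ _ in B, ENNReal.ofReal (2 / c * δ) ∂(ν.prod ν) := (setLIntegral_const _ _).symm
      _ ≤ ∫⁻ q in B, ν (Prod.mk q ⁻¹' A) ∂(ν.prod ν) :=
          setLIntegral_mono' (measurableSet_Icc.prod measurableSet_Icc) hslice
      _ ≤ ∫⁻ q, ν (Prod.mk q ⁻¹' A) ∂(ν.prod ν) := setLIntegral_le_lintegral _ _
      _ = cube μ A := (Measure.prod_apply hAm).symm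
  exact (ENNReal.ofReal_le_iff_le_toReal (measure_ne_top _ _)).1 hmain

/-- The Gaussian means are bounded below uniformly in small `δ`: on the slab of width `δ` the kernel
is at least `e^(-π) / δ`. -/
lemma exists_le_smoothed {c μ : ℝ} (hc : 1 < c) (hμ : 0 < μ) (hμ3 : μ ≤ 1 / 3) :
    ∃ κ : ℝ, 0 < κ ∧ ∃ δ₀ : ℝ, 0 < δ₀ ∧ ∀ δ : ℝ, 0 < δ → δ ≤ δ₀ →
      κ ≤ ∫ p, δ⁻¹ * Real.exp (-Real.pi * (phase c p / δ) ^ 2) ∂(cube μ) := by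
  obtain ⟨κ, hκ, δ₀, hδ₀, h⟩ := exists_le_measure_slab hc hμ hμ3
  refine ⟨κ * Real.exp (-Real.pi), by positivity, δ₀, hδ₀, fun δ hδ hδ' => ?_⟩
  set f : (ℝ × ℝ) × ℝ → ℝ := fun p => δ⁻¹ * Real.exp (-Real.pi * (phase c p / δ) ^ 2) with hf
  have hf0 : ∀ p, 0 ≤ f p := fun p => by positivity
  have hfi : Integrable f (cube μ) := by
    have hph := continuous_phase hc
    refine (integrable_const (δ⁻¹ : ℝ)).mono'
      (Continuous.aestronglyMeasurable (by fun_prop)) (Filter.Eventually.of_forall fun p => ?_)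
    rw [Real.norm_eq_abs, abs_of_nonneg (hf0 p)]
    refine mul_le_of_le_one_right (by positivity) ?_
    rw [Real.exp_le_one_iff, neg_mul, neg_nonpos]
    positivity
  have h1 := mul_meas_ge_le_integral_of_nonneg (Filter.Eventually.of_forall hf0) hfi
    (δ⁻¹ * Real.exp (-Real.pi))
  have h2 : {p | |phase c p| ≤ δ} ⊆ {p | δ⁻¹ * Real.exp (-Real.pi) ≤ f p} := by
    intro p hp
    simp only [Set.mem_ofPred_eq, hf] at hp ⊢
    have h3 : (phase c p / δ) ^ 2 ≤ 1 := by
      rw [sq_le_one_iff_abs_le_one, abs_div, abs_of_pos hδ]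
      exact (div_le_one hδ).2 hp
    gcongr
    nlinarith [Real.pi_pos]
  calc κ * Real.exp (-Real.pi) = δ⁻¹ * Real.exp (-Real.pi) * (κ * δ) := by field_simp
    _ ≤ δ⁻¹ * Real.exp (-Real.pi) * (cube μ).real {p | |phase c p| ≤ δ} := by
        gcongr; exact h δ hδ hδ'
    _ ≤ δ⁻¹ * Real.exp (-Real.pi) * (cube μ).real {p | δ⁻¹ * Real.exp (-Real.pi) ≤ f p} := by
        exact mul_le_mul_of_nonneg_left (measureReal_mono h2 (measure_ne_top _ _)) (by positivity)
    _ ≤ _ := h1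

/-! ### Conclusion -/

/-- The case `X = 1`. -/
lemma unit_case {c μ : ℝ} (hc : 1 < c) (hμ : 0 < μ) (hμ3 : μ ≤ 1 / 3) :
    (∫ α : ℝ, e (-α) * (I c μ 1 α) ^ 3).im = 0 ∧
      0 < (∫ α : ℝ, e (-α) * (I c μ 1 α) ^ 3).re := by
  have hμ1 : μ ≤ 1 := by linarith
  have hlim := tendsto_smoothed hc hμ hμ1
  have hpos : ∀ n : ℕ, 0 < 1 / ((n : ℝ) + 1) := fun n => by positivity
  simp_rw [fun n : ℕ => smoothed_eq (μ := μ) hc hμ1 (hpos n)] at hlim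
  obtain ⟨κ, hκ, δ₀, hδ₀, h⟩ := exists_le_smoothed hc hμ hμ3
  constructor
  · refine tendsto_nhds_unique ((Complex.continuous_im.tendsto _).comp hlim) ?_
    simp only [Function.comp_def, Complex.ofReal_im]
    exact tendsto_const_nhds
  · refine hκ.trans_le (ge_of_tendsto ((Complex.continuous_re.tendsto _).comp hlim) ?_)
    have h0 : ∀ᶠ n : ℕ in Filter.atTop, 1 / ((n : ℝ) + 1) ≤ δ₀ :=
      tendsto_one_div_add_atTop_nhds_zero_nat.eventually_le_const hδ₀
    filter_upwards [h0] with n hn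
    simp only [Function.comp_def, Complex.ofReal_re]
    exact h _ (hpos n) hn

theorem stmt_15 (c μ : ℝ) (hc : 1 < c) (hμ1 : 0 < μ) (hμ2 : μ ≤ 1 / 3) :
    ∃ c₀ : ℝ, 0 < c₀ ∧ ∃ X₀ : ℝ,
      ∀ X : ℝ, X₀ ≤ X →
        Integrable (fun α : ℝ => e (-(X ^ c) * α) * (I c μ X α) ^ 3) ∧
        (∫ α : ℝ, e (-(X ^ c) * α) * (I c μ X α) ^ 3).im = 0 ∧
        c₀ * X ^ (3 - c) ≤ (∫ α : ℝ, e (-(X ^ c) * α) * (I c μ X α) ^ 3).re := by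
  have hμ : μ ≤ 1 := by linarith
  obtain ⟨him, hre⟩ := unit_case hc hμ1 hμ2
  -- The constant is the value of the integral at `X = 1`.
  refine ⟨_, hre, 1, fun X hX => ?_⟩
  have hX0 : 0 < X := by linarith
  have hXc : 0 < X ^ c := Real.rpow_pos_of_pos hX0 c
  set h : ℝ → ℂ := fun α => e (-α) * (I c μ 1 α) ^ 3 with hh
  have hfun : (fun α : ℝ => e (-(X ^ c) * α) * (I c μ X α) ^ 3) =
      fun α => ((X ^ 3 : ℝ) : ℂ) * h (X ^ c * α) := by
    funext α
    rw [I_scale hμ1 hμ hX0, hh, neg_mul]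
    push_cast; ring
  have hval : ∫ α : ℝ, ((X ^ 3 : ℝ) : ℂ) * h (X ^ c * α) =
      ((X ^ (3 - c) : ℝ) : ℂ) * ∫ α, h α := by
    rw [integral_const_mul, Measure.integral_comp_mul_left, abs_of_pos (inv_pos.2 hXc),
      Complex.real_smul, ← mul_assoc, ← Complex.ofReal_mul, Real.rpow_sub hX0, div_eq_mul_inv]
    norm_num
  rw [hfun, hval]
  refine ⟨((integrable_unit hc hμ1 hμ).comp_mul_left' hXc.ne').const_mul _, ?_, ?_⟩
  · rw [Complex.im_ofReal_mul, him, mul_zero]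
  · rw [Complex.re_ofReal_mul, mul_comm]
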